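/- Let γ > 0, ρ ≤ 0, α ∈ ℝ, β ≥ 0, and let U be a random variable uniformly distributed on [0,1]. If 1 − α − γ > 0, then E[ U^{−α} · K_{γ,ρ}(1/U) · (−log U)^{β} ] is finite. -/

import Mathlib

open MeasureTheory Filter Real

noncomputable section

/-- `K_{γ,ρ}(x) = ∫₁^x u^{γ−1} (∫₁^u s^{ρ−1} ds) du`. -/
def Kfun (γ ρ x : ℝ) : ℝ :=
  ∫ u in (1:ℝ)..x, u ^ (γ - 1) * ∫ s in (1:ℝ)..u, s ^ (ρ - 1)

/-!
On `1 ≤ s ≤ u ≤ x` the weight `u ^ γ * s ^ ρ` is at most `x ^ δ`, where `δ = max {0, γ, γ + ρ}`, so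
comparison with `∫₁^x u⁻¹ ∫₁^u s⁻¹ = (log x)² / 2` gives `K(x) ≤ x ^ δ (log x)² / 2`. Hence the
integrand is dominated by `x ^ (-α - δ) (-log x) ^ (β + 2) / 2`, which the substitution
`x = exp (-t)` turns into a convergent Gamma integral as soon as `α + δ < 1` and `β > -3`.
-/

open Set

theorem continuousOn_integral_of_isOpen {E : Type*} [NormedAddCommGroup E] [NormedSpace ℝ E]
    [CompleteSpace E] {f : ℝ → E} {s : Set ℝ} [s.OrdConnected] {a : ℝ} (hs : IsOpen s)
    (ha : a ∈ s) (hf : ContinuousOn f s) : ContinuousOn (fun x => ∫ u in a..x, f u) s := by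
  intro x hx
  have hint : IntervalIntegrable f volume a x :=
    (hf.mono (OrdConnected.uIcc_subset ‹_› ha hx)).intervalIntegrable
  have hderiv := intervalIntegral.integral_hasDerivAt_right hint
    (hf.stronglyMeasurableAtFilter hs x hx) (hf.continuousAt (hs.mem_nhds hx))
  exact hderiv.continuousAt.continuousWithinAt

theorem continuousOn_rpow_const_Ioi (r : ℝ) : ContinuousOn (fun x : ℝ => x ^ r) (Ioi 0) :=
  continuousOn_id.rpow_const fun _ hx => Or.inl (ne_of_gt hx)

theorem continuousOn_log_Ioi : ContinuousOn log (Ioi 0) :=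
  continuousOn_log.mono fun _ hx => ne_of_gt hx

theorem continuousOn_Kfun_integrand (γ ρ : ℝ) :
    ContinuousOn (fun u : ℝ => u ^ (γ - 1) * ∫ s in (1 : ℝ)..u, s ^ (ρ - 1)) (Ioi 0) :=
  (continuousOn_rpow_const_Ioi _).mul
    (continuousOn_integral_of_isOpen isOpen_Ioi (mem_Ioi.2 one_pos) (continuousOn_rpow_const_Ioi _))

theorem continuousOn_Kfun (γ ρ : ℝ) : ContinuousOn (Kfun γ ρ) (Ioi 0) :=
  continuousOn_integral_of_isOpen isOpen_Ioi (mem_Ioi.2 one_pos) (continuousOn_Kfun_integrand γ ρ)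

theorem Kfun_nonneg (γ ρ : ℝ) {x : ℝ} (hx : 1 ≤ x) : 0 ≤ Kfun γ ρ x := by
  refine intervalIntegral.integral_nonneg hx fun u hu => ?_
  refine mul_nonneg (rpow_nonneg (by linarith [hu.1]) _) ?_
  exact intervalIntegral.integral_nonneg hu.1 fun s hs => rpow_nonneg (by linarith [hs.1]) _

theorem integral_log_pow_mul_inv {a b : ℝ} (ha : 0 < a) (hb : 0 < b) (n : ℕ) :
    ∫ u in a..b, log u ^ n * u⁻¹ = (log b ^ (n + 1) - log a ^ (n + 1)) / (n + 1) := by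
  have hne : ∀ u ∈ uIcc a b, u ≠ 0 := fun u hu => ((lt_min ha hb).trans_le hu.1).ne'
  rw [← integral_pow]
  exact intervalIntegral.integral_comp_mul_deriv (g := fun t => t ^ n)
    (fun u hu => hasDerivAt_log (hne u hu)) (continuousOn_inv₀.mono hne) (continuous_pow n)

theorem integral_rpow_mul_log_pow_le {r δ x : ℝ} (hδ : 0 ≤ δ) (hr : r ≤ δ) (hx : 1 ≤ x) (n : ℕ) :
    ∫ u in (1 : ℝ)..x, u ^ (r - 1) * log u ^ n ≤ x ^ δ * (log x ^ (n + 1) / (n + 1)) := by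
  have hsub : Icc 1 x ⊆ Ioi 0 := (Icc_subset_Ioi_iff hx).2 one_pos
  have hlog : ContinuousOn (fun u => log u ^ n) (Icc 1 x) := (continuousOn_log_Ioi.mono hsub).pow n
  calc ∫ u in (1 : ℝ)..x, u ^ (r - 1) * log u ^ n
      ≤ ∫ u in (1 : ℝ)..x, x ^ δ * (log u ^ n * u⁻¹) := by
        refine intervalIntegral.integral_mono_on hx
          (((continuousOn_rpow_const_Ioi _).mono hsub).mul hlog |>.intervalIntegrable_of_Icc hx)
          ((hlog.mul (continuousOn_inv₀.mono fun u hu => (hsub hu).ne')).const_mul _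
            |>.intervalIntegrable_of_Icc hx) fun u hu => ?_
        have hu0 : 0 < u := hsub hu
        have hlog0 : 0 ≤ log u := log_nonneg hu.1
        have hpow : u ^ r ≤ x ^ δ :=
          (rpow_le_rpow_of_exponent_le hu.1 hr).trans (rpow_le_rpow hu0.le hu.2 hδ)
        calc u ^ (r - 1) * log u ^ n = u ^ r * (log u ^ n * u⁻¹) := by
              rw [rpow_sub_one hu0.ne']; ring
          _ ≤ x ^ δ * (log u ^ n * u⁻¹) := by gcongr
    _ = x ^ δ * (log x ^ (n + 1) / (n + 1)) := by
        rw [intervalIntegral.integral_const_mul,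
          integral_log_pow_mul_inv one_pos (one_pos.trans_le hx)]
        simp

theorem Kfun_le {γ ρ δ x : ℝ} (hδ : 0 ≤ δ) (hγ : γ ≤ δ) (hγρ : γ + ρ ≤ δ) (hx : 1 ≤ x) :
    Kfun γ ρ x ≤ x ^ δ * (log x ^ 2 / 2) := by
  have hsub : Icc 1 x ⊆ Ioi 0 := (Icc_subset_Ioi_iff hx).2 one_pos
  set σ := max ρ 0
  have hσ : γ + σ ≤ δ := by
    rw [← max_add_add_left, add_zero]
    exact max_le hγρ hγ
  calc Kfun γ ρ x ≤ ∫ u in (1 : ℝ)..x, u ^ (γ + σ - 1) * log u ^ 1 := by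
        refine intervalIntegral.integral_mono_on hx
          ((continuousOn_Kfun_integrand γ ρ).mono hsub |>.intervalIntegrable_of_Icc hx)
          (((continuousOn_rpow_const_Ioi _).mul (continuousOn_log_Ioi.pow 1)).mono hsub
            |>.intervalIntegrable_of_Icc hx) fun u hu => ?_
        have hu0 : 0 < u := hsub hu
        have hinner : ∫ s in (1 : ℝ)..u, s ^ (ρ - 1) ≤ u ^ σ * log u := by
          simpa using
            integral_rpow_mul_log_pow_le (le_max_right ρ 0) (le_max_left ρ 0) hu.1 0
        calc u ^ (γ - 1) * ∫ s in (1 : ℝ)..u, s ^ (ρ - 1) ≤ u ^ (γ - 1) * (u ^ σ * log u) := by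
              gcongr
          _ = u ^ (γ + σ - 1) * log u ^ 1 := by
              rw [add_sub_right_comm, rpow_add hu0, pow_one, mul_assoc]
    _ ≤ x ^ δ * (log x ^ 2 / 2) := by
        simpa [one_add_one_eq_two] using integral_rpow_mul_log_pow_le hδ hσ hx 1

theorem image_exp_neg_Ioi_zero : (fun t : ℝ => exp (-t)) '' Ioi 0 = Ioo 0 1 := by
  ext x
  constructor
  · rintro ⟨t, ht, rfl⟩
    exact ⟨exp_pos _, exp_lt_one_iff.2 (neg_lt_zero.2 ht)⟩
  · rintro ⟨hx0, hx1⟩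
    exact ⟨-log x, neg_pos.2 (log_neg hx0 hx1), by simp [exp_log hx0]⟩

theorem integrableOn_rpow_mul_neg_log_rpow {a b : ℝ} (ha : -1 < a) (hb : -1 < b) :
    IntegrableOn (fun x : ℝ => x ^ a * (-log x) ^ b) (Ioo 0 1) := by
  have hderiv (t : ℝ) (_ : t ∈ Ioi 0) :
      HasDerivWithinAt (fun t : ℝ => exp (-t)) (-exp (-t)) (Ioi 0) t := by
    simpa using ((hasDerivAt_neg t).exp).hasDerivWithinAt
  have hinj : InjOn (fun t : ℝ => exp (-t)) (Ioi 0) :=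
    (exp_injective.comp neg_injective).injOn
  have hgamma : IntegrableOn (fun t : ℝ => t ^ b * exp (-((a + 1) * t))) (Ioi 0) := by
    simpa only [rpow_one, neg_mul] using
      integrableOn_rpow_mul_exp_neg_mul_rpow hb one_pos (neg_lt_iff_pos_add.1 ha)
  rw [← image_exp_neg_Ioi_zero,
    integrableOn_image_iff_integrableOn_abs_deriv_smul measurableSet_Ioi hderiv hinj]
  refine hgamma.congr_fun (fun t _ => ?_) measurableSet_Ioi
  calc t ^ b * exp (-((a + 1) * t)) = exp (-t) * (exp (-t * a) * t ^ b) := by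
        rw [← mul_assoc, ← exp_add, mul_comm]; ring_nf
    _ = |-exp (-t)| • (exp (-t) ^ a * (-log (exp (-t))) ^ b) := by
        rw [abs_neg, abs_exp, log_exp, neg_neg, exp_mul, smul_eq_mul]

theorem continuousOn_rpow_mul_Kfun_one_div_mul_neg_log_rpow (γ ρ α β : ℝ) :
    ContinuousOn (fun x : ℝ => x ^ (-α) * Kfun γ ρ (1 / x) * (-log x) ^ β) (Ioo 0 1) := by
  have hsub : Ioo (0 : ℝ) 1 ⊆ Ioi 0 := Ioo_subset_Ioi_self
  have hK : ContinuousOn (fun x : ℝ => Kfun γ ρ (1 / x)) (Ioo 0 1) :=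
    (continuousOn_Kfun γ ρ).comp (continuousOn_const.div continuousOn_id fun x hx => hx.1.ne')
      fun x hx => one_div_pos.2 hx.1
  have hlog : ContinuousOn (fun x : ℝ => (-log x) ^ β) (Ioo 0 1) :=
    (continuousOn_log_Ioi.mono hsub).neg.rpow_const
      fun x hx => Or.inl (neg_pos.2 (log_neg hx.1 hx.2)).ne'
  exact (((continuousOn_rpow_const_Ioi _).mono hsub).mul hK).mul hlog

theorem norm_rpow_mul_Kfun_one_div_mul_neg_log_rpow_le {γ ρ δ x : ℝ} (α β : ℝ) (hδ : 0 ≤ δ)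
    (hγ : γ ≤ δ) (hγρ : γ + ρ ≤ δ) (hx : x ∈ Ioo 0 1) :
    ‖x ^ (-α) * Kfun γ ρ (1 / x) * (-log x) ^ β‖ ≤
      2⁻¹ * (x ^ (-α - δ) * (-log x) ^ (β + 2)) := by
  obtain ⟨hx0, hx1⟩ := hx
  have hlog : 0 < -log x := neg_pos.2 (log_neg hx0 hx1)
  have hone : 1 ≤ 1 / x := one_le_one_div hx0 hx1.le
  have hK0 : 0 ≤ Kfun γ ρ (1 / x) := Kfun_nonneg γ ρ hone
  have hK : Kfun γ ρ (1 / x) ≤ x ^ (-δ) * ((-log x) ^ 2 / 2) := by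
    simpa [one_div, inv_rpow hx0.le, rpow_neg hx0.le] using Kfun_le hδ hγ hγρ hone
  rw [norm_of_nonneg (by positivity)]
  calc x ^ (-α) * Kfun γ ρ (1 / x) * (-log x) ^ β
      ≤ x ^ (-α) * (x ^ (-δ) * ((-log x) ^ 2 / 2)) * (-log x) ^ β := by gcongr
    _ = 2⁻¹ * (x ^ (-α) * x ^ (-δ) * ((-log x) ^ β * (-log x) ^ 2)) := by ring
    _ = 2⁻¹ * (x ^ (-α - δ) * (-log x) ^ (β + 2)) := by
        rw [← rpow_add hx0, ← sub_eq_add_neg, ← rpow_two, ← rpow_add hlog]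

theorem integrableOn_rpow_mul_Kfun_one_div_mul_neg_log_rpow {γ ρ α β : ℝ} (hα : α < 1)
    (hαγ : α + γ < 1) (hαγρ : α + γ + ρ < 1) (hβ : -3 < β) :
    IntegrableOn (fun x : ℝ => x ^ (-α) * Kfun γ ρ (1 / x) * (-log x) ^ β) (Icc 0 1) := by
  rw [integrableOn_Icc_iff_integrableOn_Ioo]
  obtain ⟨δ, hδ, hγ, hγρ, hαδ⟩ : ∃ δ, 0 ≤ δ ∧ γ ≤ δ ∧ γ + ρ ≤ δ ∧ δ < 1 - α :=
    ⟨max 0 (max γ (γ + ρ)), by simp, by simp, by simp,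
      max_lt (by linarith) (max_lt (by linarith) (by linarith))⟩
  have hdom : IntegrableOn (fun x : ℝ => 2⁻¹ * (x ^ (-α - δ) * (-log x) ^ (β + 2))) (Ioo 0 1) :=
    (integrableOn_rpow_mul_neg_log_rpow (by linarith) (by linarith)).const_mul _
  refine Integrable.mono' hdom
    ((continuousOn_rpow_mul_Kfun_one_div_mul_neg_log_rpow γ ρ α β).aestronglyMeasurable
      measurableSet_Ioo) ?_
  exact ae_restrict_of_forall_mem measurableSet_Ioo fun x hx =>
    norm_rpow_mul_Kfun_one_div_mul_neg_log_rpow_le α β hδ hγ hγρ hx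

theorem uniform_K_moment_finite_general {γ ρ α β : ℝ} (hα : α < 1) (hαγ : α + γ < 1)
    (hαγρ : α + γ + ρ < 1) (hβ : -3 < β) {Ω : Type*} [MeasurableSpace Ω] {P : Measure Ω}
    {U : Ω → ℝ} (hU : ProbabilityTheory.HasLaw U (volume.restrict (Icc 0 1)) P) :
    Integrable (fun ω => U ω ^ (-α) * Kfun γ ρ (1 / U ω) * (-log (U ω)) ^ β) P := by
  have hint := integrableOn_rpow_mul_Kfun_one_div_mul_neg_log_rpow hα hαγ hαγρ hβ
  rw [IntegrableOn, ← hU.map_eq] at hint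
  exact hint.comp_aemeasurable hU.aemeasurable

/-- Lemma 3 (i): if `1 − α − γ > 0` then `E[U^{−α} K_{γ,ρ}(1/U) (−log U)^β] < ∞`
for `U` uniform on `[0,1]`. -/
theorem uniform_K_moment_finite
    (γ ρ α β : ℝ) (hγ : 0 < γ) (hρ : ρ ≤ 0) (hβ : 0 ≤ β) (hαγ : 0 < 1 - α - γ)
    {Ω : Type*} [MeasurableSpace Ω] (P : Measure Ω) [IsProbabilityMeasure P]
    (U : Ω → ℝ) (hUmeas : Measurable U)
    (hUlaw : Measure.map U P = volume.restrict (Set.Icc (0:ℝ) 1)) :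
    Integrable (fun ω => U ω ^ (-α) * Kfun γ ρ (1 / U ω) * (-Real.log (U ω)) ^ β) P :=
  uniform_K_moment_finite_general (by linarith) (by linarith) (by linarith) (by linarith)
    ⟨hUmeas.aemeasurable, hUlaw⟩
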